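/- arXiv:2203.15736 — 2 statements merged into one kernel-verified Lean document; each statement's English description precedes it below -/
import Mathlib

section
/- Suppose α ≥ β > 0, and let Y ~ Bin(m⁺, α log n / n) and Z ~ Bin(m⁻, β log n / n) be independent with m⁺ = (1+o(1)) n/2 and m⁻ = (1+o(1)) n/2. Then P(Y < Z) = n^{−D₊(α,β)+o(1)}, where D₊(α,β) = (√α − √β)²/2 = (α+β)/2 − √(αβ). -/
open Finset

/-- `binomP m p k` is the probability that `Bin(m, p) = k`. -/
noncomputable def binomP (m : ℕ) (p : ℝ) (k : ℕ) : ℝ :=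
  (m.choose k : ℝ) * p ^ k * (1 - p) ^ (m - k)

/-- `P(Y < Z)` for independent `Y ~ Bin(mp, p)` and `Z ~ Bin(mm, q)`. -/
noncomputable def probYltZ (mp mm : ℕ) (p q : ℝ) : ℝ :=
  ∑ k ∈ Finset.range (mp + 1), ∑ l ∈ Finset.range (mm + 1),
    (if k < l then binomP mp p k * binomP mm q l else 0)

/-!
Only the means `λ = m⁺ p` and `μ = m⁻ q` matter on the logarithmic scale, and with `λ ~ a L`,
`μ ~ b L` the claim is that `P(Y < Z) = exp (-((√a - √b)² + o(1)) L)`.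

The upper bound is Chernoff's: `1_{Y < Z} ≤ s ^ (Z - Y)` for `s ≥ 1`, optimised at `s = √a / √b`.
The lower bound keeps the single term `Y = k`, `Z = k + 1` with `k ~ √(ab) L`, the level at which
the Poisson rate functions of `Y` and `Z` have the smallest sum.
-/

section

open Filter Real
open scoped Nat Topology

theorem binomP_nonneg {p : ℝ} (hp₀ : 0 ≤ p) (hp₁ : p ≤ 1) (m k : ℕ) : 0 ≤ binomP m p k := by
  have : 0 ≤ 1 - p := sub_nonneg.2 hp₁
  unfold binomP
  positivity

theorem binomP_eq_zero_of_lt {m k : ℕ} (h : m < k) (p : ℝ) : binomP m p k = 0 := by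
  simp [binomP, Nat.choose_eq_zero_of_lt h]

theorem sum_binomP_mul_pow (m : ℕ) (p t : ℝ) :
    ∑ k ∈ range (m + 1), binomP m p k * t ^ k = (1 + p * (t - 1)) ^ m := by
  rw [show 1 + p * (t - 1) = p * t + (1 - p) by ring, add_pow]
  refine sum_congr rfl fun k _ ↦ ?_
  rw [binomP, mul_pow]
  ring

theorem sum_binomP_mul_pow_le_exp {p t : ℝ} (hp₀ : 0 ≤ p) (hp₁ : p ≤ 1) (ht : 0 ≤ t) (m : ℕ) :
    ∑ k ∈ range (m + 1), binomP m p k * t ^ k ≤ exp (m * p * (t - 1)) := by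
  have hbase : 0 ≤ 1 + p * (t - 1) := by nlinarith
  calc
    _ = (1 + p * (t - 1)) ^ m := sum_binomP_mul_pow m p t
    _ ≤ exp (p * (t - 1)) ^ m := by
      gcongr
      linarith [add_one_le_exp (p * (t - 1))]
    _ = exp (m * p * (t - 1)) := by rw [← exp_nat_mul, mul_assoc]

section Comparison

variable {m m' : ℕ} {p q : ℝ}

theorem probYltZ_le_exp (hp₀ : 0 ≤ p) (hp₁ : p ≤ 1) (hq₀ : 0 ≤ q) (hq₁ : q ≤ 1)
    {s : ℝ} (hs : 1 ≤ s) :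
    probYltZ m m' p q ≤ exp (m * p * (s⁻¹ - 1) + m' * q * (s - 1)) := by
  have hs₀ : 0 < s := one_pos.trans_le hs
  have hterm (k l : ℕ) : (if k < l then binomP m p k * binomP m' q l else 0) ≤
      binomP m p k * s⁻¹ ^ k * (binomP m' q l * s ^ l) := by
    have hY := binomP_nonneg hp₀ hp₁ m k
    have hZ := binomP_nonneg hq₀ hq₁ m' l
    split_ifs with hkl
    · have hpow : 1 ≤ s⁻¹ ^ k * s ^ l := by
        rw [inv_pow, ← div_eq_inv_mul, one_le_div (by positivity)]
        exact pow_le_pow_right₀ hs hkl.le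
      calc
        _ ≤ binomP m p k * binomP m' q l * (s⁻¹ ^ k * s ^ l) :=
          le_mul_of_one_le_right (by positivity) hpow
        _ = _ := by ring
    · positivity
  calc
    probYltZ m m' p q ≤ (∑ k ∈ range (m + 1), binomP m p k * s⁻¹ ^ k) *
        ∑ l ∈ range (m' + 1), binomP m' q l * s ^ l := by
      rw [sum_mul_sum]
      exact sum_le_sum fun k _ ↦ sum_le_sum fun l _ ↦ hterm k l
    _ ≤ exp (m * p * (s⁻¹ - 1)) * exp (m' * q * (s - 1)) :=
      mul_le_mul (sum_binomP_mul_pow_le_exp hp₀ hp₁ (by positivity) m)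
        (sum_binomP_mul_pow_le_exp hq₀ hq₁ hs₀.le m')
        (sum_nonneg fun l _ ↦ mul_nonneg (binomP_nonneg hq₀ hq₁ m' l) (by positivity))
        (exp_pos _).le
    _ = _ := (exp_add _ _).symm

theorem binomP_mul_binomP_le_probYltZ (hp₀ : 0 ≤ p) (hp₁ : p ≤ 1) (hq₀ : 0 ≤ q) (hq₁ : q ≤ 1)
    {k l : ℕ} (hkl : k < l) : binomP m p k * binomP m' q l ≤ probYltZ m m' p q := by
  have hterm (x : ℕ × ℕ) : 0 ≤ if x.1 < x.2 then binomP m p x.1 * binomP m' q x.2 else 0 := by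
    split_ifs
    · exact mul_nonneg (binomP_nonneg hp₀ hp₁ m _) (binomP_nonneg hq₀ hq₁ m' _)
    · rfl
  rw [probYltZ, ← sum_product']
  by_cases hmem : (k, l) ∈ range (m + 1) ×ˢ range (m' + 1)
  · simpa only [if_pos hkl] using single_le_sum (fun x _ ↦ hterm x) hmem
  · have hzero : binomP m p k * binomP m' q l = 0 := by
      rw [mem_product, mem_range, mem_range, not_and_or, not_lt, not_lt] at hmem
      rcases hmem with hk | hl
      · rw [binomP_eq_zero_of_lt hk, zero_mul]
      · rw [binomP_eq_zero_of_lt hl, mul_zero]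
    exact hzero.trans_le (sum_nonneg fun x _ ↦ hterm x)

end Comparison

theorem exp_neg_mul_div_one_sub_le_pow {p : ℝ} (hp : p < 1) (m : ℕ) :
    exp (-(m * p / (1 - p))) ≤ (1 - p) ^ m := by
  have hp' : 0 < 1 - p := sub_pos.2 hp
  have hlog : -(p / (1 - p)) ≤ log (1 - p) := by
    convert one_sub_inv_le_log_of_pos hp' using 1
    field_simp
    ring
  calc
    exp (-(m * p / (1 - p))) = exp (-(p / (1 - p))) ^ m := by
      rw [← exp_nat_mul]
      ring_nf
    _ ≤ (1 - p) ^ m := by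
      gcongr
      exact (le_log_iff_exp_le hp').1 hlog

theorem sub_mul_pow_div_factorial_mul_exp_le_binomP {m k : ℕ} {p : ℝ} (hp₀ : 0 ≤ p) (hp₁ : p < 1)
    (hkm : k ≤ m) :
    ((m - k) * p) ^ k / k ! * exp (-(m * p / (1 - p))) ≤ binomP m p k := by
  have hp' : 0 < 1 - p := sub_pos.2 hp₁
  have hchoose : ((m : ℝ) - k) ^ k / k ! ≤ m.choose k := by
    refine le_trans ?_ (Nat.pow_le_choose k m)
    rw [← Nat.cast_sub hkm]
    gcongr
    lia
  have hpow : exp (-(m * p / (1 - p))) ≤ (1 - p) ^ (m - k) :=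
    (exp_neg_mul_div_one_sub_le_pow hp₁ m).trans
      (pow_le_pow_of_le_one hp'.le (by linarith) (Nat.sub_le m k))
  calc
    _ = ((m : ℝ) - k) ^ k / k ! * p ^ k * exp (-(m * p / (1 - p))) := by
      rw [mul_pow]
      ring
    _ ≤ m.choose k * p ^ k * (1 - p) ^ (m - k) := by gcongr

theorem tendsto_log_factorial_div_sub_log :
    Tendsto (fun n : ℕ ↦ log n ! / n - log n) atTop (𝓝 (-1)) := by
  have hstirling : Tendsto (fun n : ℕ ↦ log (Stirling.stirlingSeq n) / n) atTop (𝓝 0) :=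
    (Stirling.tendsto_stirlingSeq_sqrt_pi.log (by positivity)).div_atTop
      tendsto_natCast_atTop_atTop
  have hlog : Tendsto (fun n : ℕ ↦ log (2 * n) / (2 * n)) atTop (𝓝 0) :=
    isLittleO_log_id_atTop.tendsto_div_nhds_zero.comp
      (tendsto_natCast_atTop_atTop.const_mul_atTop two_pos)
  have hsum := (hstirling.add hlog).sub_const 1
  rw [add_zero, zero_sub] at hsum
  refine hsum.congr' ?_
  filter_upwards [eventually_gt_atTop 0] with n hn
  have hn' : (0 : ℝ) < n := Nat.cast_pos.2 hn
  rw [Stirling.log_stirlingSeq_formula, log_div hn'.ne' (exp_pos 1).ne', log_exp]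
  field_simp
  ring

/-- The Cramér rate function of the Poisson distribution of mean `a`, evaluated at `c`. -/
noncomputable def poissonRate (a c : ℝ) : ℝ :=
  c * log (c / a) - c + a

theorem poissonRate_sqrt_mul_sqrt_add {a b : ℝ} (ha : 0 < a) (hb : 0 < b) :
    poissonRate a (√a * √b) + poissonRate b (√a * √b) = (√a - √b) ^ 2 := by
  have hlog : log (√a * √b / a) + log (√a * √b / b) = 0 := by
    rw [← log_mul (by positivity) (by positivity), div_mul_div_comm, mul_mul_mul_comm,
      mul_self_sqrt ha.le, mul_self_sqrt hb.le, div_self (by positivity), log_one]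
  unfold poissonRate
  linear_combination √a * √b * hlog - sq_sqrt ha.le - sq_sqrt hb.le

section Asymptotics

variable {ι : Type*} {l : Filter ι} {L : ι → ℝ} {m m' k : ι → ℕ} {p q : ι → ℝ} {a b c : ℝ}

theorem eventually_pos_of_tendsto_mean_div (hL : Tendsto L l atTop)
    (hm : Tendsto (fun i ↦ m i * p i / L i) l (𝓝 a)) (ha : 0 < a) : ∀ᶠ i in l, 0 < p i := by
  filter_upwards [hL.eventually_gt_atTop 0, hm.eventually_const_lt ha] with i hLi hmi
  exact pos_of_mul_pos_right ((div_pos_iff_of_pos_right hLi).1 hmi) (m i).cast_nonneg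

theorem eventually_probYltZ_le_exp (hb : 0 < b) (hba : b ≤ a) (hL : Tendsto L l atTop)
    (hp : ∀ᶠ i in l, p i ≤ 1) (hq : ∀ᶠ i in l, q i ≤ 1)
    (hm : Tendsto (fun i ↦ m i * p i / L i) l (𝓝 a))
    (hm' : Tendsto (fun i ↦ m' i * q i / L i) l (𝓝 b)) {r : ℝ} (hr : r < (√a - √b) ^ 2) :
    ∀ᶠ i in l, probYltZ (m i) (m' i) (p i) (q i) ≤ exp (L i * -r) := by
  have ha : 0 < a := hb.trans_le hba
  have hs : 1 ≤ √a / √b := (one_le_div (sqrt_pos.2 hb)).2 (sqrt_le_sqrt hba)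
  have hexponent : a * ((√a / √b)⁻¹ - 1) + b * (√a / √b - 1) = -(√a - √b) ^ 2 := by
    have hmean : a * (√b / √a) = √a * √b := by rw [mul_div_left_comm, div_sqrt, mul_comm]
    have hmean' : b * (√a / √b) = √a * √b := by rw [mul_div_left_comm, div_sqrt]
    rw [inv_div]
    linear_combination hmean + hmean' + sq_sqrt ha.le + sq_sqrt hb.le
  have hlim := (hm.mul_const ((√a / √b)⁻¹ - 1)).add (hm'.mul_const (√a / √b - 1))
  rw [hexponent] at hlim
  filter_upwards [hL.eventually_gt_atTop 0, hp, hq, eventually_pos_of_tendsto_mean_div hL hm ha,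
    eventually_pos_of_tendsto_mean_div hL hm' hb,
    hlim.eventually_lt_const (neg_lt_neg hr)] with i hLi hp₁ hq₁ hp₀ hq₀ hlt
  refine (probYltZ_le_exp hp₀.le hp₁ hq₀.le hq₁ hs).trans (exp_le_exp.2 ?_)
  rw [div_mul_eq_mul_div, div_mul_eq_mul_div, ← add_div, div_lt_iff₀' hLi] at hlt
  exact hlt.le

theorem tendsto_sub_mul_div (hp : Tendsto p l (𝓝 0))
    (hm : Tendsto (fun i ↦ m i * p i / L i) l (𝓝 a)) (hk : Tendsto (fun i ↦ k i / L i) l (𝓝 c)) :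
    Tendsto (fun i ↦ (m i - k i) * p i / L i) l (𝓝 a) := by
  have hsub := hm.sub (hk.mul hp)
  rw [mul_zero, sub_zero] at hsub
  exact hsub.congr fun i ↦ by ring

theorem tendsto_log_binomP_lower_bound_div (ha : 0 < a) (hc : 0 < c) (hL : Tendsto L l atTop)
    (hp : Tendsto p l (𝓝 0)) (hm : Tendsto (fun i ↦ m i * p i / L i) l (𝓝 a))
    (hk : Tendsto (fun i ↦ k i / L i) l (𝓝 c)) :
    Tendsto (fun i ↦ log (((m i - k i) * p i) ^ k i / (k i)! *
      exp (-(m i * p i / (1 - p i)))) / L i) l (𝓝 (-poissonRate a c)) := by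
  have hLpos : ∀ᶠ i in l, 0 < L i := hL.eventually_gt_atTop 0
  have hk_top : Tendsto (fun i ↦ (k i : ℝ)) l atTop :=
    (hk.pos_mul_atTop hc hL).congr' <| by
      filter_upwards [hLpos] with i hLi using div_mul_cancel₀ _ hLi.ne'
  have hmk := tendsto_sub_mul_div hp hm hk
  have hratio : Tendsto (fun i ↦ log ((m i - k i) * p i / L i / (k i / L i))) l (𝓝 (log (a / c))) :=
    (hmk.div hk hc.ne').log (by positivity)
  have hfactorial := tendsto_log_factorial_div_sub_log.comp (tendsto_natCast_atTop_iff.1 hk_top)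
  have hlim := (hk.mul (hratio.sub hfactorial)).sub
    (hm.div (hp.const_sub 1) (by rw [sub_zero]; exact one_ne_zero))
  have hvalue : c * (log (a / c) - -1) - a / (1 - 0) = -poissonRate a c := by
    rw [poissonRate, ← inv_div c a, log_inv]
    ring
  rw [hvalue] at hlim
  refine hlim.congr' ?_
  filter_upwards [hLpos, hk_top.eventually_gt_atTop 0, hmk.eventually_const_lt ha]
    with i hLi hki hmki
  have hmean : 0 < (m i - k i) * p i := (div_pos_iff_of_pos_right hLi).1 hmki
  simp only [Function.comp_apply, Pi.div_apply]
  rw [div_div_div_cancel_right₀ hLi.ne', log_div hmean.ne' hki.ne',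
    log_mul (by positivity) (exp_pos _).ne', log_exp, log_div (pow_pos hmean _).ne' (by positivity),
    log_pow]
  field_simp
  ring

theorem eventually_exp_le_binomP (ha : 0 < a) (hc : 0 < c) (hL : Tendsto L l atTop)
    (hp : Tendsto p l (𝓝 0)) (hm : Tendsto (fun i ↦ m i * p i / L i) l (𝓝 a))
    (hk : Tendsto (fun i ↦ k i / L i) l (𝓝 c)) {r : ℝ} (hr : poissonRate a c < r) :
    ∀ᶠ i in l, exp (L i * -r) ≤ binomP (m i) (p i) (k i) := by
  filter_upwards [hL.eventually_gt_atTop 0, eventually_pos_of_tendsto_mean_div hL hm ha,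
    hp.eventually_lt_const one_pos, (tendsto_sub_mul_div hp hm hk).eventually_const_lt ha,
    (tendsto_log_binomP_lower_bound_div ha hc hL hp hm hk).eventually_const_lt (neg_lt_neg hr)]
    with i hLi hp₀ hp₁ hmki hlt
  have hmean : 0 < (m i - k i) * p i := (div_pos_iff_of_pos_right hLi).1 hmki
  have hkm : (k i : ℝ) < m i := sub_pos.1 (pos_of_mul_pos_left hmean hp₀.le)
  rw [lt_div_iff₀' hLi, lt_log_iff_exp_lt (by positivity)] at hlt
  exact hlt.le.trans
    (sub_mul_pow_div_factorial_mul_exp_le_binomP hp₀.le hp₁ (Nat.cast_lt.1 hkm).le)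

theorem tendsto_floor_add_one_div (hc : 0 ≤ c) (hL : Tendsto L l atTop) :
    Tendsto (fun i ↦ ((⌊c * L i⌋₊ + 1 : ℕ) : ℝ) / L i) l (𝓝 c) := by
  have hadd := ((tendsto_nat_floor_mul_div_atTop hc).comp hL).add
    (tendsto_const_nhds (x := (1 : ℝ)) |>.div_atTop hL)
  rw [add_zero] at hadd
  refine hadd.congr fun i ↦ ?_
  simp only [Function.comp_apply]
  push_cast
  ring

theorem eventually_exp_le_probYltZ (ha : 0 < a) (hb : 0 < b) (hL : Tendsto L l atTop)
    (hp : Tendsto p l (𝓝 0)) (hq : Tendsto q l (𝓝 0))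
    (hm : Tendsto (fun i ↦ m i * p i / L i) l (𝓝 a))
    (hm' : Tendsto (fun i ↦ m' i * q i / L i) l (𝓝 b)) {r : ℝ} (hr : (√a - √b) ^ 2 < r) :
    ∀ᶠ i in l, exp (L i * -r) ≤ probYltZ (m i) (m' i) (p i) (q i) := by
  have hc : 0 < √a * √b := by positivity
  obtain ⟨r₁, hr₁, r₂, hr₂, rfl⟩ : ∃ r₁ > poissonRate a (√a * √b),
      ∃ r₂ > poissonRate b (√a * √b), r₁ + r₂ = r := by
    rw [← poissonRate_sqrt_mul_sqrt_add ha hb] at hr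
    obtain ⟨r₁, hr₁, hlt⟩ := exists_between (lt_sub_iff_add_lt.2 hr)
    exact ⟨r₁, hr₁, r - r₁, lt_sub_comm.1 hlt, add_sub_cancel r₁ r⟩
  filter_upwards [eventually_pos_of_tendsto_mean_div hL hm ha,
    eventually_pos_of_tendsto_mean_div hL hm' hb,
    hp.eventually_le_const one_pos, hq.eventually_le_const one_pos,
    eventually_exp_le_binomP ha hc hL hp hm
      ((tendsto_nat_floor_mul_div_atTop hc.le).comp hL) hr₁,
    eventually_exp_le_binomP hb hc hL hq hm' (tendsto_floor_add_one_div hc.le hL) hr₂]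
    with i hp₀ hq₀ hp₁ hq₁ hY hZ
  calc
    exp (L i * -(r₁ + r₂)) = exp (L i * -r₁) * exp (L i * -r₂) := by
      rw [← exp_add]
      ring_nf
    _ ≤ _ := mul_le_mul hY hZ (exp_pos _).le (binomP_nonneg hp₀.le hp₁ _ _)
    _ ≤ _ := binomP_mul_binomP_le_probYltZ hp₀.le hp₁ hq₀.le hq₁ (Nat.lt_succ_self _)

theorem statement5_general {x : ι → ℝ} (hb : 0 < b) (hba : b ≤ a) (hx : Tendsto x l atTop)
    (hp : Tendsto p l (𝓝 0)) (hq : Tendsto q l (𝓝 0))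
    (hm : Tendsto (fun i ↦ m i * p i / log (x i)) l (𝓝 a))
    (hm' : Tendsto (fun i ↦ m' i * q i / log (x i)) l (𝓝 b)) {δ : ℝ} (hδ : 0 < δ) :
    ∀ᶠ i in l, x i ^ (-(√a - √b) ^ 2 - δ) ≤ probYltZ (m i) (m' i) (p i) (q i) ∧
      probYltZ (m i) (m' i) (p i) (q i) ≤ x i ^ (-(√a - √b) ^ 2 + δ) := by
  have hL : Tendsto (fun i ↦ log (x i)) l atTop := tendsto_log_atTop.comp hx
  filter_upwards [hx.eventually_gt_atTop 0,
    eventually_exp_le_probYltZ (hb.trans_le hba) hb hL hp hq hm hm' (lt_add_of_pos_right _ hδ),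
    eventually_probYltZ_le_exp hb hba hL (hp.eventually_le_const one_pos)
      (hq.eventually_le_const one_pos) hm hm' (sub_lt_self _ hδ)] with i hxi hlower hupper
  rw [rpow_def_of_pos hxi, rpow_def_of_pos hxi, ← neg_add', neg_add_eq_sub _ δ, ← neg_sub _ δ]
  exact ⟨hlower, hupper⟩

end Asymptotics

theorem tendsto_mul_log_div_atTop (a : ℝ) :
    Tendsto (fun n : ℕ ↦ a * log n / n) atTop (𝓝 0) := by
  have hlog := (isLittleO_log_id_atTop.tendsto_div_nhds_zero.comp
    tendsto_natCast_atTop_atTop).const_mul a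
  rw [mul_zero] at hlog
  exact hlog.congr fun n ↦ (mul_div_assoc _ _ _).symm

theorem tendsto_mul_mul_log_div_div_log {m : ℕ → ℕ} (a : ℝ)
    (hm : Tendsto (fun n : ℕ ↦ (m n : ℝ) / ((n : ℝ) / 2)) atTop (𝓝 1)) :
    Tendsto (fun n : ℕ ↦ m n * (a * log n / n) / log n) atTop (𝓝 (a / 2)) := by
  have hmul := hm.mul_const (a / 2)
  rw [one_mul] at hmul
  refine hmul.congr' ?_
  filter_upwards [eventually_gt_atTop 1] with n hn
  have hlog : 0 < log n := log_pos (Nat.one_lt_cast.2 hn)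
  field_simp

theorem sqrt_half_sub_sqrt_half_sq {a b : ℝ} (ha : 0 ≤ a) (hb : 0 ≤ b) :
    (√(a / 2) - √(b / 2)) ^ 2 = (a + b) / 2 - √(a * b) := by
  have hmul : √(a / 2) * √(b / 2) = √(a * b) / 2 := by
    rw [← sqrt_mul (by positivity), div_mul_div_comm, sqrt_div (by positivity),
      sqrt_mul_self zero_le_two]
  linear_combination sq_sqrt (div_nonneg ha zero_le_two) + sq_sqrt (div_nonneg hb zero_le_two) -
    2 * hmul

end

/-- for `α ≥ β > 0` and independent `Y ~ Bin(m⁺, α log n/n)`,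
`Z ~ Bin(m⁻, β log n/n)` with `m⁺, m⁻ = (1+o(1)) n/2`, one has
`P(Y < Z) = n^{−D₊(α,β)+o(1)}` where `D₊(α,β) = (α+β)/2 − √(αβ)`:
for every `δ > 0`, eventually `n^{−D₊−δ} ≤ P(Y < Z) ≤ n^{−D₊+δ}`. -/
theorem statement5 (α β : ℝ) (hβ : 0 < β) (hβα : β ≤ α)
    (mp mm : ℕ → ℕ)
    (hmp : Filter.Tendsto (fun n : ℕ => (mp n : ℝ) / ((n : ℝ) / 2))
      Filter.atTop (nhds 1))
    (hmm : Filter.Tendsto (fun n : ℕ => (mm n : ℝ) / ((n : ℝ) / 2))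
      Filter.atTop (nhds 1)) :
    ∀ δ : ℝ, 0 < δ → ∀ᶠ n : ℕ in Filter.atTop,
      (n : ℝ) ^ (-((α + β) / 2 - Real.sqrt (α * β)) - δ)
        ≤ probYltZ (mp n) (mm n) (α * Real.log n / n) (β * Real.log n / n) ∧
      probYltZ (mp n) (mm n) (α * Real.log n / n) (β * Real.log n / n)
        ≤ (n : ℝ) ^ (-((α + β) / 2 - Real.sqrt (α * β)) + δ) := by
  intro δ hδ
  rw [← sqrt_half_sub_sqrt_half_sq (hβ.le.trans hβα) hβ.le]
  exact statement5_general (half_pos hβ) (by linarith) tendsto_natCast_atTop_atTop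
    (tendsto_mul_log_div_atTop α) (tendsto_mul_log_div_atTop β)
    (tendsto_mul_mul_log_div_div_log α hmp) (tendsto_mul_mul_log_div_div_log β hmm) hδ
end

section
/- Let G ~ SBM(n, α log n / n, β log n / n) with fixed α, β > 0, fix k ≥ 1, and let F denote the set of vertices outside the k-core of G. Then with probability 1 − o(1), |F| ≤ n^{1 − (α+β)/2 + o(1)}. -/
open MeasureTheory Finset

/-- `sbmLaw ℙ n p q σ X`: under `ℙ`, the labels `σ` and adjacency indicators `X` are
distributed as `SBM(n, p, q)`. -/
def sbmLaw {Ω : Type} [MeasurableSpace Ω] (ℙ : Measure Ω) (n : ℕ) (p q : ℝ)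
    (σ : Ω → Fin n → Bool) (X : Ω → Fin n → Fin n → Bool) : Prop :=
  ℙ {ω | (∀ i j, X ω i j = X ω j i) ∧ ∀ i, X ω i i = false} = 1 ∧
  ∀ (ℓ : Fin n → Bool) (e : Fin n → Fin n → Bool),
    (∀ i j, e i j = e j i) → (∀ i, e i i = false) →
    (ℙ {ω | σ ω = ℓ ∧ X ω = e}).toReal =
      (1 / 2 : ℝ) ^ n * ∏ i : Fin n, ∏ j : Fin n,
        (if i < j then
          (if e i j then (if ℓ i = ℓ j then p else q)
           else 1 - (if ℓ i = ℓ j then p else q))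
         else 1)

/-! Vertices outside the `k`-core can be peeled off one at a time, each having fewer than `k`
neighbours among those left. So if at least `m` vertices lie outside the core, some set `U` of `m`
vertices sends at most `k * m` edges to its complement, which is unlikely as `m * n` pairs are
available. By Markov's inequality for `t ^ cutSize` this has probability at most
`t⁻¹ ^ (k * m) * E[t ^ cutSize]`. Given the labels in `U`, the labels and edges of different
vertices outside `U` are independent, so the conditional expectation is a product over these
vertices, each factor averaging about `exp (-(1 - t) * m * (p + q) / 2)`. With `t = 1 / log n` and
`m = ⌈n ^ (1 - (α + β) / 2 + δ)⌉`, the factor `t⁻¹ ^ (k * m)` is only `exp (o(m * log n))`, while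
the union bound over `U` costs at most `exp (m * (1 + ((α + β) / 2 - δ) * log n))`, leaving
`exp (-(δ - o(1)) * m * log n)`. -/

section KCore

variable {V : Type*} [Fintype V] [DecidableEq V]

/-- The vertices outside the `k`-core of the graph with adjacency indicators `e`. The `k`-core is
encoded as the union of all finite vertex sets inducing a subgraph of minimum degree at least
`k`. -/
def outsideKCore (e : V → V → Bool) (k : ℕ) : Set V :=
  {i | ∀ S : Finset V, (∀ v ∈ S, k ≤ (S.filter (fun u => u ≠ v ∧ e v u = true)).card) → i ∉ S}

/-- The number of edges between `U` and its complement in the graph with adjacency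
indicators `e`. -/
def cutSize (e : V → V → Bool) (U : Finset V) : ℕ :=
  #(Rel.interedges (fun u w => e u w = true) U Uᶜ)

lemma exists_degree_compl_lt_of_not_outsideKCore_subset {e : V → V → Bool} {k : ℕ} {U : Finset V}
    (h : ¬ outsideKCore e k ⊆ U) : ∃ v ∈ Uᶜ, #{u ∈ Uᶜ | u ≠ v ∧ e v u = true} < k := by
  contrapose! h
  exact fun i hi => by simpa using hi Uᶜ h

lemma cutSize_insert_le (e : V → V → Bool) (U : Finset V) (v : V) :
    cutSize e (insert v U) ≤ cutSize e U + #{u ∈ Uᶜ | u ≠ v ∧ e v u = true} := by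
  have hsub : Rel.interedges (fun u w => e u w = true) (insert v U) (insert v U)ᶜ ⊆
      Rel.interedges (fun u w => e u w = true) U Uᶜ ∪
        ({u ∈ Uᶜ | u ≠ v ∧ e v u = true} : Finset V).image (v, ·) := by
    rintro ⟨u, w⟩ huw
    simp only [Rel.mk_mem_interedges_iff, mem_insert, mem_compl, not_or, mem_union, mem_image,
      mem_filter, Prod.mk.injEq] at huw ⊢
    grind
  calc cutSize e (insert v U) ≤ _ := card_le_card hsub
    _ ≤ cutSize e U + _ := card_union_le _ _
    _ ≤ _ := by gcongr; exact card_image_le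

lemma exists_cutSize_le_of_le_ncard_outsideKCore (e : V → V → Bool) (k : ℕ) {m : ℕ}
    (hm : m ≤ (outsideKCore e k).ncard) : ∃ U : Finset V, #U = m ∧ cutSize e U ≤ k * m := by
  induction m with
  | zero => exact ⟨∅, by simp, by simp [cutSize, Rel.interedges_empty_left]⟩
  | succ m ih =>
    obtain ⟨U, hU, hcut⟩ := ih (by omega)
    have hnot : ¬ outsideKCore e k ⊆ U := fun hsub => by
      have := Set.ncard_le_ncard hsub
      rw [Set.ncard_coe_finset] at this
      omega
    obtain ⟨v, hv, hdeg⟩ := exists_degree_compl_lt_of_not_outsideKCore_subset hnot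
    refine ⟨insert v U, by rw [card_insert_of_notMem (by simpa using hv), hU], ?_⟩
    linarith [cutSize_insert_le e U v]

lemma pow_cutSize {M : Type*} [CommMonoid M] (t : M) (e : V → V → Bool) (U : Finset V) :
    t ^ cutSize e U = ∏ i ∈ U, ∏ j ∈ Uᶜ, if e i j then t else 1 := by
  rw [cutSize, Rel.interedges, ← prod_product' U Uᶜ fun i j => if e i j then t else 1,
    prod_ite, prod_const, prod_const_one, mul_one]

end KCore

section Pairs

variable {V : Type*} [Fintype V] [LinearOrder V]

lemma prod_prod_ite_lt {M : Type*} [CommMonoid M] (h : V → V → M) :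
    ∏ i, ∏ j, (if i < j then h i j else 1) = ∏ x : {x : V × V // x.1 < x.2}, h x.1.1 x.1.2 := by
  rw [← Fintype.prod_prod_type' fun i j => if i < j then h i j else 1, prod_ite, prod_const_one,
    mul_one]
  exact prod_subtype _ (by simp) _

lemma prod_prod_ite_lt_cut {M : Type*} [CommMonoid M] (U : Finset V) {h : V → V → M}
    (hsymm : ∀ i j, h i j = h j i) :
    ∏ i, ∏ j, (if i < j then (if i ∈ U ↔ j ∉ U then h i j else 1) else 1)
      = ∏ i ∈ U, ∏ j ∈ Uᶜ, h i j := by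
  let up i j := if i < j ∧ i ∈ U ∧ j ∉ U then h i j else 1
  let down i j := if j < i ∧ i ∈ U ∧ j ∉ U then h i j else 1
  calc ∏ i, ∏ j, (if i < j then (if i ∈ U ↔ j ∉ U then h i j else 1) else 1)
      = (∏ i, ∏ j, up i j) * ∏ i, ∏ j, down j i := by
        simp_rw [← prod_mul_distrib]
        refine prod_congr rfl fun i _ => prod_congr rfl fun j _ => ?_
        have := hsymm i j
        by_cases hi : i ∈ U <;> by_cases hj : j ∈ U <;> simp [up, down, hi, hj, this]
    _ = ∏ i, ∏ j, (if i ∈ U then if j ∈ Uᶜ then h i j else 1 else 1) := by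
        rw [prod_comm (f := fun i j => down j i)]
        simp_rw [← prod_mul_distrib]
        refine prod_congr rfl fun i _ => prod_congr rfl fun j _ => ?_
        rcases lt_trichotomy i j with hij | rfl | hij <;>
          simp +contextual [up, down, *, not_lt_of_gt, ite_and]
    _ = ∏ i ∈ U, ∏ j ∈ Uᶜ, h i j := by
        simp_rw [← Fintype.prod_ite_mem U, ← Fintype.prod_ite_mem Uᶜ]
        refine prod_congr rfl fun i _ => ?_
        split_ifs <;> simp

end Pairs

section RandomGraph

variable {V : Type*}

/-- `e` is the table of adjacency indicators of a simple graph. -/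
def IsAdjacency (e : V → V → Bool) : Prop :=
  (∀ i j, e i j = e j i) ∧ ∀ i, e i i = false

instance [Fintype V] (e : V → V → Bool) : Decidable (IsAdjacency e) :=
  inferInstanceAs (Decidable (_ ∧ _))

variable [LinearOrder V]

/-- A simple graph amounts to a free choice of which pairs `i < j` are edges. -/
def adjacencyEquiv (V : Type*) [LinearOrder V] :
    {e : V → V → Bool // IsAdjacency e} ≃ ({x : V × V // x.1 < x.2} → Bool) where
  toFun e x := e.1 x.1.1 x.1.2
  invFun g := ⟨fun i j => if h : i < j then g ⟨(i, j), h⟩ else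
      if h : j < i then g ⟨(j, i), h⟩ else false, by
    constructor
    · intro i j
      rcases lt_trichotomy i j with h | rfl | h <;> simp [*, not_lt_of_gt]
    · simp⟩
  left_inv := by
    rintro ⟨e, hsymm, hloop⟩
    ext i j
    rcases lt_trichotomy i j with h | rfl | h <;> simp [*, not_lt_of_gt]
  right_inv g := by
    ext ⟨⟨i, j⟩, h⟩
    simp [h]

variable [Fintype V]

/-- The probability of the graph `e` when the pairs `i < j` are edges independently with
probabilities `r i j`. -/
def graphWeight {R : Type*} [CommRing R] (r : V → V → R) (e : V → V → Bool) : R :=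
  ∏ i, ∏ j, if i < j then (if e i j then r i j else 1 - r i j) else 1

lemma sum_adjacency_prod_ite_lt {R : Type*} [CommSemiring R] (f : V → V → Bool → R) :
    ∑ e : {e : V → V → Bool // IsAdjacency e}, ∏ i, ∏ j, (if i < j then f i j (e.1 i j) else 1)
      = ∏ i, ∏ j, (if i < j then ∑ b, f i j b else 1) := by
  simp_rw [prod_prod_ite_lt]
  rw [Fintype.prod_sum]
  exact (adjacencyEquiv V).sum_comp fun g => ∏ x, f x.1.1 x.1.2 (g x)

lemma sum_graphWeight_mul_pow_cutSize {R : Type*} [CommRing R] {r : V → V → R}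
    (hr : ∀ i j, r i j = r j i) (t : R) (U : Finset V) :
    ∑ e : {e : V → V → Bool // IsAdjacency e}, graphWeight r e.1 * t ^ cutSize e.1 U
      = ∏ i ∈ U, ∏ j ∈ Uᶜ, (1 - (1 - t) * r i j) := by
  let f (i j : V) (b : Bool) : R := (if b then r i j else 1 - r i j) *
    if i ∈ U ↔ j ∉ U then if b then t else 1 else 1
  have hterm (e : {e : V → V → Bool // IsAdjacency e}) :
      graphWeight r e.1 * t ^ cutSize e.1 U
        = ∏ i, ∏ j, (if i < j then f i j (e.1 i j) else 1) := by
    rw [pow_cutSize, ← prod_prod_ite_lt_cut U fun i j => by rw [e.2.1 i j], graphWeight]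
    simp_rw [← prod_mul_distrib]
    refine prod_congr rfl fun i _ => prod_congr rfl fun j _ => ?_
    by_cases hij : i < j <;> simp [f, hij]
  have hmean (i j : V) :
      ∑ b, f i j b = if i ∈ U ↔ j ∉ U then 1 - (1 - t) * r i j else 1 := by
    by_cases hcut : i ∈ U ↔ j ∉ U
    · simp [f, hcut]
      ring
    · simp [f, hcut]
  simp_rw [hterm]
  rw [sum_adjacency_prod_ite_lt]
  simp_rw [hmean]
  exact prod_prod_ite_lt_cut U fun i j => by rw [hr i j]

end RandomGraph

section Labels

open Real

lemma sum_prod_compl_restrict {V β R : Type*} [Fintype V] [DecidableEq V] [Fintype β]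
    [CommSemiring R] (U : Finset V) (F : (U → β) → V → β → R) :
    ∑ l : V → β, ∏ j ∈ Uᶜ, F (fun i => l i) j (l j) = ∑ a, ∏ j ∈ Uᶜ, ∑ b, F a j b := by
  have hsub (h : V → R) : ∏ j ∈ Uᶜ, h j = ∏ j : {j // j ∉ U}, h j := prod_subtype _ (by simp) _
  simp_rw [hsub, Fintype.prod_sum]
  rw [← (Equiv.piEquivPiSubtypeProd (· ∈ U) fun _ => β).symm.sum_comp, Fintype.sum_prod_type]
  refine sum_congr rfl fun a _ => sum_congr rfl fun b _ => prod_congr rfl fun j _ => ?_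
  simp [Equiv.piEquivPiSubtypeProd, j.2]

/-- Bound on the average, over the label of one vertex, of the probability of having no edge to a
given set, when the expected numbers of edges under the two labels add up to `x`. -/
noncomputable def isolationBound (x : ℝ) : ℝ :=
  exp (-x / 2 + x ^ 2 / 8)

lemma isolationBound_nonneg (x : ℝ) : 0 ≤ isolationBound x :=
  (exp_pos _).le

lemma exp_neg_add_exp_neg_le {A B : ℝ} (hA : 0 ≤ A) (hB : 0 ≤ B) :
    exp (-A) + exp (-B) ≤ 2 * isolationBound (A + B) := by
  have hsq : ((A - B) / 2) ^ 2 / 2 ≤ (A + B) ^ 2 / 8 := by nlinarith [mul_nonneg hA hB]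
  calc exp (-A) + exp (-B) = 2 * (exp (-(A + B) / 2) * cosh ((A - B) / 2)) := by
        rw [cosh_eq, mul_div_assoc', mul_div_cancel₀ _ two_ne_zero, mul_add, ← exp_add, ← exp_add,
          add_comm]
        ring_nf
    _ ≤ 2 * (exp (-(A + B) / 2) * exp ((A + B) ^ 2 / 8)) := by
        gcongr
        exact (cosh_le_exp_half_sq _).trans (exp_le_exp.2 hsq)
    _ = 2 * isolationBound (A + B) := by rw [isolationBound, exp_add]

/-- The probability that vertices with labels `x` and `y` are joined in the block model with
parameters `p` within and `q` across communities. -/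
def blockProb {R : Type*} (p q : R) (x y : Bool) : R :=
  if x = y then p else q

lemma sum_prod_one_sub_blockProb_le {ι : Type*} [Fintype ι] {p q : ℝ} (hp : p ∈ Set.Icc 0 1)
    (hq : q ∈ Set.Icc 0 1) (a : ι → Bool) :
    ∑ b, ∏ i, (1 - blockProb p q (a i) b) ≤ 2 * isolationBound (Fintype.card ι * (p + q)) := by
  have hmem (x y : Bool) : blockProb p q x y ∈ Set.Icc (0 : ℝ) 1 := by
    unfold blockProb; split_ifs <;> assumption
  have hprod (b : Bool) :
      ∏ i, (1 - blockProb p q (a i) b) ≤ exp (-∑ i, blockProb p q (a i) b) := by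
    rw [← sum_neg_distrib, exp_sum]
    exact prod_le_prod (fun i _ => sub_nonneg.2 (hmem _ _).2) fun i _ => one_sub_le_exp_neg _
  have htotal : ∑ i, blockProb p q (a i) true + ∑ i, blockProb p q (a i) false
      = Fintype.card ι * (p + q) := by
    have hpair (i : ι) : blockProb p q (a i) true + blockProb p q (a i) false = p + q := by
      cases a i <;> simp [blockProb, add_comm]
    rw [← sum_add_distrib, Fintype.sum_congr _ _ hpair, sum_const, card_univ, nsmul_eq_mul]
  rw [Fintype.sum_bool, ← htotal]
  exact (add_le_add (hprod true) (hprod false)).trans <|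
    exp_neg_add_exp_neg_le (sum_nonneg fun _ _ => (hmem _ _).1) (sum_nonneg fun _ _ => (hmem _ _).1)

lemma average_prod_one_sub_blockProb_le {V : Type*} [Fintype V] [DecidableEq V] {p q : ℝ}
    (hp : p ∈ Set.Icc 0 1) (hq : q ∈ Set.Icc 0 1) (U : Finset V) :
    (1 / 2) ^ Fintype.card V *
        ∑ l : V → Bool, ∏ i ∈ U, ∏ j ∈ Uᶜ, (1 - blockProb p q (l i) (l j)) ≤
      isolationBound (#U * (p + q)) ^ #Uᶜ := by
  set M := isolationBound (#U * (p + q))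
  have hnonneg (x y : Bool) : 0 ≤ 1 - blockProb p q x y := by
    unfold blockProb; split_ifs
    exacts [sub_nonneg.2 hp.2, sub_nonneg.2 hq.2]
  have hfactor (a : U → Bool) : ∑ b, ∏ i, (1 - blockProb p q (a i) b) ≤ 2 * M := by
    simpa using sum_prod_one_sub_blockProb_le hp hq a
  have hsum : ∑ l : V → Bool, ∏ i ∈ U, ∏ j ∈ Uᶜ, (1 - blockProb p q (l i) (l j))
      = ∑ a : U → Bool, (∑ b, ∏ i, (1 - blockProb p q (a i) b)) ^ #Uᶜ := by
    have := sum_prod_compl_restrict (β := Bool) U fun a _ b => ∏ i, (1 - blockProb p q (a i) b)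
    simp_rw [prod_const] at this
    rw [← this]
    refine sum_congr rfl fun l _ => ?_
    rw [prod_comm]
    exact prod_congr rfl fun j _ => (prod_coe_sort U fun i => 1 - blockProb p q (l i) (l j)).symm
  calc (1 / 2) ^ Fintype.card V *
        ∑ l : V → Bool, ∏ i ∈ U, ∏ j ∈ Uᶜ, (1 - blockProb p q (l i) (l j))
      ≤ (1 / 2) ^ Fintype.card V * ∑ _a : U → Bool, (2 * M) ^ #Uᶜ := by
        rw [hsum]
        gcongr with a
        · exact sum_nonneg fun b _ => prod_nonneg fun i _ => hnonneg _ _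
        · exact hfactor a
    _ = M ^ #Uᶜ := by
        rw [sum_const, card_univ, Fintype.card_fun, Fintype.card_bool, Fintype.card_coe,
          nsmul_eq_mul, ← card_add_card_compl U, pow_add, mul_pow]
        simp only [one_div, inv_pow, Nat.cast_pow, Nat.cast_ofNat]
        field_simp

end Labels

section Law

variable {Ω : Type} [MeasurableSpace Ω] {ℙ : Measure Ω} {n : ℕ} {p q : ℝ}
  {σ : Ω → Fin n → Bool} {X : Ω → Fin n → Fin n → Bool}

lemma sbmLaw.measureReal_eq (h : sbmLaw ℙ n p q σ X) (l : Fin n → Bool)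
    {e : Fin n → Fin n → Bool} (he : IsAdjacency e) :
    ℙ.real {ω | σ ω = l ∧ X ω = e} =
      (1 / 2) ^ n * graphWeight (fun i j => blockProb p q (l i) (l j)) e :=
  h.2 l e he.1 he.2

variable [IsProbabilityMeasure ℙ]

lemma sbmLaw.ae_isAdjacency (hX : Measurable X) (h : sbmLaw ℙ n p q σ X) :
    ∀ᵐ ω ∂ℙ, IsAdjacency (X ω) :=
  (prob_compl_eq_zero_iff (hX (Set.toFinite {e | IsAdjacency e}).measurableSet)).2 h.1

lemma sbmLaw.integral_comp (hσX : Measurable fun ω => (σ ω, X ω)) (h : sbmLaw ℙ n p q σ X)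
    (f : (Fin n → Fin n → Bool) → ℝ) :
    ∫ ω, f (X ω) ∂ℙ = (1 / 2) ^ n * ∑ l : Fin n → Bool, ∑ e : {e // IsAdjacency e},
      graphWeight (fun i j => blockProb p q (l i) (l j)) e.1 * f e.1 := by
  have hpoint (l : Fin n → Bool) (e : Fin n → Fin n → Bool) :
      (ℙ.map fun ω => (σ ω, X ω)).real {(l, e)} = ℙ.real {ω | σ ω = l ∧ X ω = e} := by
    rw [map_measureReal_apply hσX (measurableSet_singleton _)]
    congr 1
    ext ω
    simp
  have hnull (l : Fin n → Bool) {e : Fin n → Fin n → Bool} (he : ¬ IsAdjacency e) :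
      ℙ.real {ω | σ ω = l ∧ X ω = e} = 0 := by
    rw [measureReal_eq_zero_iff]
    refine measure_mono_null ?_ (h.ae_isAdjacency hσX.snd)
    rintro ω ⟨-, rfl⟩
    exact he
  calc ∫ ω, f (X ω) ∂ℙ = ∫ z, f z.2 ∂ℙ.map fun ω => (σ ω, X ω) :=
        (integral_map (f := fun z => f z.2) hσX.aemeasurable .of_discrete).symm
    _ = ∑ l, ∑ e, ℙ.real {ω | σ ω = l ∧ X ω = e} * f e := by
        rw [integral_fintype .of_finite, Fintype.sum_prod_type]
        simp_rw [hpoint, smul_eq_mul]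
    _ = ∑ l, ∑ e : {e // IsAdjacency e}, ℙ.real {ω | σ ω = l ∧ X ω = e.1} * f e.1 := by
        refine sum_congr rfl fun l _ => ?_
        rw [← sum_subtype {e | IsAdjacency e} (by simp)
          fun e => ℙ.real {ω | σ ω = l ∧ X ω = e} * f e]
        refine (sum_filter_of_ne fun e _ hne => ?_).symm
        contrapose! hne
        rw [hnull l hne, zero_mul]
    _ = _ := by
        simp_rw [mul_sum, ← mul_assoc]
        exact sum_congr rfl fun l _ => sum_congr rfl fun e _ => by rw [h.measureReal_eq l e.2]

lemma sbmLaw.integral_pow_cutSize_le (hσX : Measurable fun ω => (σ ω, X ω))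
    (h : sbmLaw ℙ n p q σ X) (hp : p ∈ Set.Icc 0 1) (hq : q ∈ Set.Icc 0 1) {t : ℝ}
    (ht : t ∈ Set.Icc 0 1) (U : Finset (Fin n)) :
    ∫ ω, t ^ cutSize (X ω) U ∂ℙ ≤
      isolationBound (#U * ((1 - t) * (p + q))) ^ #Uᶜ := by
  have hscale (x y : Bool) :
      (1 - t) * blockProb p q x y = blockProb ((1 - t) * p) ((1 - t) * q) x y :=
    mul_ite ..
  have hmem {r : ℝ} (hr : r ∈ Set.Icc 0 1) : (1 - t) * r ∈ Set.Icc 0 1 :=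
    unitInterval.mul_mem (Set.Icc.one_sub_mem ht) hr
  rw [h.integral_comp hσX fun e => t ^ cutSize e U]
  simp_rw [fun l : Fin n → Bool =>
    sum_graphWeight_mul_pow_cutSize (r := fun i j => blockProb p q (l i) (l j))
      (fun i j => by simp only [blockProb, eq_comm]) t U, hscale]
  simpa [mul_add] using average_prod_one_sub_blockProb_le (hmem hp) (hmem hq) U

end Law

section Tail

variable {Ω : Type*} [MeasurableSpace Ω] {μ : Measure Ω} [IsFiniteMeasure μ]

lemma measureReal_le_inv_pow_mul_integral_pow {N : Ω → ℕ} {t : ℝ} (ht0 : 0 < t) (ht1 : t ≤ 1)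
    (hint : Integrable (fun ω => t ^ N ω) μ) (c : ℕ) :
    μ.real {ω | N ω ≤ c} ≤ t⁻¹ ^ c * ∫ ω, t ^ N ω ∂μ := by
  rw [inv_pow, ← div_eq_inv_mul, le_div_iff₀' (by positivity)]
  calc t ^ c * μ.real {ω | N ω ≤ c} ≤ t ^ c * μ.real {ω | t ^ c ≤ t ^ N ω} := by
        refine mul_le_mul_of_nonneg_left (measureReal_mono fun ω hω => ?_) (by positivity)
        exact pow_le_pow_of_le_one ht0.le ht1 hω
    _ ≤ ∫ ω, t ^ N ω ∂μ :=
        mul_meas_ge_le_integral_of_nonneg (.of_forall fun ω => by positivity) hint _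

end Tail

section Bound

variable {Ω : Type} [MeasurableSpace Ω] {ℙ : Measure Ω} [IsProbabilityMeasure ℙ] {n : ℕ} {p q : ℝ}
  {σ : Ω → Fin n → Bool} {X : Ω → Fin n → Fin n → Bool}

lemma sbmLaw.measureReal_le_ncard_outsideKCore_le (hσX : Measurable fun ω => (σ ω, X ω))
    (h : sbmLaw ℙ n p q σ X) (hp : p ∈ Set.Icc 0 1) (hq : q ∈ Set.Icc 0 1) {t : ℝ}
    (ht0 : 0 < t) (ht1 : t ≤ 1) (k m : ℕ) :
    ℙ.real {ω | m ≤ (outsideKCore (X ω) k).ncard} ≤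
      n.choose m * (t⁻¹ ^ (k * m) * isolationBound (m * ((1 - t) * (p + q))) ^ (n - m)) := by
  have hint (U : Finset (Fin n)) : Integrable (fun ω => t ^ cutSize (X ω) U) ℙ :=
    (Integrable.of_finite (f := fun e => t ^ cutSize e U)).comp_measurable hσX.snd
  have hcut {U : Finset (Fin n)} (hU : U ∈ powersetCard m univ) :
      ℙ.real {ω | cutSize (X ω) U ≤ k * m} ≤
        t⁻¹ ^ (k * m) * isolationBound (m * ((1 - t) * (p + q))) ^ (n - m) := by
    refine (measureReal_le_inv_pow_mul_integral_pow ht0 ht1 (hint U) _).trans ?_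
    gcongr
    simpa [card_compl, (mem_powersetCard.1 hU).2] using
      h.integral_pow_cutSize_le hσX hp hq ⟨ht0.le, ht1⟩ U
  calc ℙ.real {ω | m ≤ (outsideKCore (X ω) k).ncard}
      ≤ ℙ.real (⋃ U ∈ powersetCard m univ, {ω | cutSize (X ω) U ≤ k * m}) := by
        refine measureReal_mono (fun ω hω => ?_) (measure_ne_top _ _)
        obtain ⟨U, hU, hle⟩ := exists_cutSize_le_of_le_ncard_outsideKCore (X ω) k hω
        simp only [Set.mem_iUnion]
        exact ⟨U, mem_powersetCard.2 ⟨subset_univ U, hU⟩, hle⟩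
    _ ≤ ∑ U ∈ powersetCard m univ, ℙ.real {ω | cutSize (X ω) U ≤ k * m} :=
        measureReal_biUnion_finset_le _ _
    _ ≤ _ := by
        refine (sum_le_card_nsmul _ _ _ fun U => hcut).trans_eq ?_
        rw [card_powersetCard, card_univ, Fintype.card_fin, nsmul_eq_mul]

end Bound

section Asymptotics

open Filter Real

lemma choose_le_exp_one_mul_div_pow (n m : ℕ) : (n.choose m : ℝ) ≤ (exp 1 * (n / m)) ^ m := by
  rcases m.eq_zero_or_pos with rfl | hm
  · simp
  have hfact : (m : ℝ) ^ m / m.factorial ≤ exp 1 ^ m := by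
    simpa [← exp_nat_mul] using pow_div_factorial_le_exp (x := (m : ℝ)) (by positivity) m
  calc (n.choose m : ℝ) ≤ n ^ m / m.factorial := Nat.choose_le_pow_div m n
    _ = m ^ m / m.factorial * (n / m) ^ m := by rw [div_pow]; field_simp
    _ ≤ (exp 1 * (n / m)) ^ m := by rw [mul_pow]; gcongr

lemma choose_le_exp_mul_one_add_log {n m : ℕ} {γ : ℝ} (hn : 0 < n) (hm : (n : ℝ) ^ γ ≤ m) :
    (n.choose m : ℝ) ≤ exp (m * (1 + (1 - γ) * log n)) := by
  have hn' : (0 : ℝ) < n := by exact_mod_cast hn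
  calc (n.choose m : ℝ) ≤ (exp 1 * (n / m)) ^ m := choose_le_exp_one_mul_div_pow n m
    _ ≤ (exp 1 * (n / (n : ℝ) ^ γ)) ^ m := by gcongr
    _ = exp (m * (1 + (1 - γ) * log n)) := by
        rw [exp_nat_mul, exp_add, mul_comm (1 - γ), ← rpow_def_of_pos hn', rpow_sub hn', rpow_one]

lemma isolationBound_pow_sub_le {n m : ℕ} {D a b : ℝ} (hn : 0 < n) (hmn : m ≤ n)
    (ha : m * D ≤ a * n) (hb : m * D ^ 2 ≤ b * n) :
    isolationBound (m * (D / n)) ^ (n - m) ≤ exp (m * (-D / 2 + a / 2 + b / 8)) := by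
  have hn' : (0 : ℝ) < n := by exact_mod_cast hn
  have ha' : m * D / n ≤ a := (div_le_iff₀ hn').2 ha
  have hb' : m * D ^ 2 / n ≤ b := (div_le_iff₀ hn').2 hb
  have hneg : 0 ≤ (m : ℝ) ^ 2 * D ^ 2 / n ^ 2 := by positivity
  rw [isolationBound, ← exp_nat_mul, Nat.cast_sub hmn, exp_le_exp]
  calc ((n : ℝ) - m) * (-(m * (D / n)) / 2 + (m * (D / n)) ^ 2 / 8)
      = m * (-D / 2 + (m * D / n) / 2 + (m * D ^ 2 / n - m ^ 2 * D ^ 2 / n ^ 2) / 8) := by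
        field_simp
        ring
    _ ≤ m * (-D / 2 + a / 2 + b / 8) := by
        gcongr
        linarith

/-- Up to the factor `m`, the logarithm of the failure probability obtained from the Chernoff
parameter `t = 1 / log n`, where `s = α + β`. -/
noncomputable def failureExponent (s δ : ℝ) (k n : ℕ) : ℝ :=
  1 + s + s ^ 2 / 8 + k * log (log n) - δ * log n

lemma choose_mul_log_pow_mul_isolationBound_pow_le {n m k : ℕ} {s δ : ℝ} (hs : 0 ≤ s) (hn : 0 < n)
    (hm : (n : ℝ) ^ (1 - s / 2 + δ) ≤ m) (hlog : 1 ≤ log n) (hmlog : m * log n ^ 2 ≤ n) :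
    n.choose m * (log n ^ (k * m) * isolationBound (m * ((log n - 1) * s / n)) ^ (n - m)) ≤
      exp (m * failureExponent s δ k n) := by
  have hmn : m ≤ n := by
    exact_mod_cast (le_mul_of_one_le_right m.cast_nonneg (one_le_pow₀ hlog)).trans hmlog
  have hsq : (m : ℝ) * (log n - 1) ^ 2 ≤ n :=
    hmlog.trans' (by gcongr; linarith)
  have hlin : (m : ℝ) * (log n - 1) ≤ n :=
    hmlog.trans' (by gcongr; nlinarith)
  have hisolation := isolationBound_pow_sub_le (D := (log n - 1) * s) (a := s) (b := s ^ 2) hn hmn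
    (by nlinarith) (by nlinarith [sq_nonneg s])
  have hpow : log n ^ (k * m) = exp (m * (k * log (log n))) := by
    rw [← mul_assoc, mul_comm (m : ℝ), ← Nat.cast_mul, ← log_pow, exp_log (by positivity)]
  calc _ ≤ exp (m * (1 + (1 - (1 - s / 2 + δ)) * log n)) * (exp (m * (k * log (log n))) *
        exp (m * (-((log n - 1) * s) / 2 + s / 2 + s ^ 2 / 8))) := by
        rw [hpow]
        gcongr
        · exact mul_nonneg (exp_pos _).le (pow_nonneg (isolationBound_nonneg _) _)
        · exact choose_le_exp_mul_one_add_log hn hm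
    _ = exp (m * failureExponent s δ k n) := by
        rw [← exp_add, ← exp_add, failureExponent]
        ring_nf

lemma tendsto_log_natCast_atTop : Tendsto (fun n : ℕ => log n) atTop atTop :=
  tendsto_log_atTop.comp tendsto_natCast_atTop_atTop

lemma tendsto_failureExponent_atBot (s : ℝ) {δ : ℝ} (hδ : 0 < δ) (k : ℕ) :
    Tendsto (failureExponent s δ k) atTop atBot := by
  have hlog : ∀ᶠ x in atTop, k * log x ≤ δ / 2 * x := by
    filter_upwards [(isLittleO_log_id_atTop.const_mul_left (k : ℝ)).bound (half_pos hδ),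
      eventually_ge_atTop 0] with x hx hx0
    simpa [abs_of_nonneg hx0] using (le_abs_self _).trans hx
  have hlin : Tendsto (fun n : ℕ => 1 + s + s ^ 2 / 8 - δ / 2 * log n) atTop atBot :=
    tendsto_atBot_add_const_left _ _ <| tendsto_neg_atTop_atBot.comp <|
      tendsto_log_natCast_atTop.const_mul_atTop (half_pos hδ)
  refine tendsto_atBot_mono' _ ?_ hlin
  filter_upwards [tendsto_log_natCast_atTop.eventually hlog] with n hn
  rw [failureExponent]
  linarith

lemma eventually_mul_log_div_le_one (c : ℝ) : ∀ᶠ n : ℕ in atTop, c * log n / n ≤ 1 := by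
  have h := (isLittleO_log_id_atTop.const_mul_left c).bound one_pos
  filter_upwards [tendsto_natCast_atTop_atTop.eventually h] with n hn
  refine div_le_one_of_le₀ ?_ n.cast_nonneg
  simpa using (le_abs_self _).trans hn

lemma eventually_ceil_rpow_mul_log_sq_le {γ : ℝ} (hγ : γ < 1) :
    ∀ᶠ n : ℕ in atTop, ⌈(n : ℝ) ^ γ⌉₊ * log n ^ 2 ≤ n := by
  have hrpow : (fun x : ℝ => x ^ γ * log x ^ 2) =o[atTop] (id : ℝ → ℝ) := by
    refine ((Asymptotics.isBigO_refl (fun x : ℝ => x ^ γ) atTop).mul_isLittleO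
      (isLittleO_log_rpow_rpow_atTop 2 (sub_pos.2 hγ))).congr' ?_ ?_
    · exact .of_forall fun x => by simp
    · filter_upwards [eventually_gt_atTop 0] with x hx
      rw [← rpow_add hx, add_sub_cancel, rpow_one, id]
  have h := (hrpow.add (isLittleO_pow_log_id_atTop (n := 2))).bound one_pos
  filter_upwards [tendsto_natCast_atTop_atTop.eventually h] with n hn
  calc ⌈(n : ℝ) ^ γ⌉₊ * log n ^ 2 ≤ ((n : ℝ) ^ γ + 1) * log n ^ 2 := by
        gcongr
        exact (Nat.ceil_lt_add_one (by positivity)).le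
    _ = (n : ℝ) ^ γ * log n ^ 2 + log n ^ 2 := by ring
    _ ≤ n := by simpa using (le_abs_self _).trans hn

end Asymptotics

section FailureProbability

open Filter Real

variable {α β δ : ℝ}

lemma sbmLaw.measureReal_rpow_lt_ncard_outsideKCore_le {Ω : Type} [MeasurableSpace Ω]
    {ℙ : Measure Ω} [IsProbabilityMeasure ℙ] {n : ℕ} {σ : Ω → Fin n → Bool}
    {X : Ω → Fin n → Fin n → Bool} (hσX : Measurable fun ω => (σ ω, X ω))
    (h : sbmLaw ℙ n (α * log n / n) (β * log n / n) σ X) (hα : 0 ≤ α) (hβ : 0 ≤ β) (hn : 0 < n)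
    (hlog : 1 ≤ log n) (hp : α * log n / n ≤ 1) (hq : β * log n / n ≤ 1)
    (hm : ⌈(n : ℝ) ^ (1 - (α + β) / 2 + δ)⌉₊ * log n ^ 2 ≤ n) (k : ℕ) :
    ℙ.real {ω | (n : ℝ) ^ (1 - (α + β) / 2 + δ) < (outsideKCore (X ω) k).ncard} ≤
      exp (⌈(n : ℝ) ^ (1 - (α + β) / 2 + δ)⌉₊ * failureExponent (α + β) δ k n) := by
  have hlog0 : 0 < log n := by linarith
  set m := ⌈(n : ℝ) ^ (1 - (α + β) / 2 + δ)⌉₊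
  have hrate : (1 - (log n)⁻¹) * (α * log n / n + β * log n / n)
      = (log n - 1) * (α + β) / n := by
    field_simp
  calc ℙ.real {ω | (n : ℝ) ^ (1 - (α + β) / 2 + δ) < (outsideKCore (X ω) k).ncard}
      ≤ ℙ.real {ω | m ≤ (outsideKCore (X ω) k).ncard} :=
        measureReal_mono fun ω hω => Nat.ceil_le.2 (le_of_lt hω)
    _ ≤ n.choose m * (log n ^ (k * m) *
          isolationBound (m * ((log n - 1) * (α + β) / n)) ^ (n - m)) := by
        simpa only [inv_inv, hrate] using h.measureReal_le_ncard_outsideKCore_le hσX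
          ⟨by positivity, hp⟩ ⟨by positivity, hq⟩ (inv_pos.2 hlog0) (inv_le_one_of_one_le₀ hlog) k m
    _ ≤ exp (m * failureExponent (α + β) δ k n) :=
        choose_mul_log_pow_mul_isolationBound_pow_le (by positivity) hn (Nat.le_ceil _) hlog hm

lemma eventually_measureReal_rpow_lt_ncard_outsideKCore_le (hα : 0 ≤ α) (hβ : 0 ≤ β) (hδ : 0 < δ)
    (k : ℕ) : ∀ᶠ n : ℕ in atTop, ∀ (Ω : Type) [MeasurableSpace Ω] (ℙ : Measure Ω)
      [IsProbabilityMeasure ℙ] (σ : Ω → Fin n → Bool) (X : Ω → Fin n → Fin n → Bool),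
      Measurable (fun ω => (σ ω, X ω)) → sbmLaw ℙ n (α * log n / n) (β * log n / n) σ X →
      ℙ.real {ω | (n : ℝ) ^ (1 - (α + β) / 2 + δ) < (outsideKCore (X ω) k).ncard} ≤
        exp (failureExponent (α + β) δ k n) := by
  rcases le_or_gt 1 (1 - (α + β) / 2 + δ) with hγ | hγ
  · filter_upwards [eventually_ge_atTop 1] with n hn Ω _ ℙ _ σ X _ _
    have hempty : {ω | (n : ℝ) ^ (1 - (α + β) / 2 + δ) < (outsideKCore (X ω) k).ncard} = ∅ := by
      simp only [Set.eq_empty_iff_forall_notMem, Set.mem_ofPred_eq, not_lt]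
      intro ω
      calc ((outsideKCore (X ω) k).ncard : ℝ) ≤ n := by
            exact_mod_cast (Set.ncard_le_card _).trans_eq (Nat.card_fin n)
        _ ≤ (n : ℝ) ^ (1 - (α + β) / 2 + δ) := self_le_rpow_of_one_le (by exact_mod_cast hn) hγ
    rw [hempty, measureReal_empty]
    positivity
  · filter_upwards [eventually_gt_atTop 0, tendsto_log_natCast_atTop.eventually_ge_atTop 1,
      eventually_mul_log_div_le_one α, eventually_mul_log_div_le_one β,
      eventually_ceil_rpow_mul_log_sq_le hγ,
      (tendsto_failureExponent_atBot (α + β) hδ k).eventually_le_atBot 0]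
      with n hn hlog hp hq hm hexponent Ω _ ℙ _ σ X hσX h
    refine (h.measureReal_rpow_lt_ncard_outsideKCore_le hσX hα hβ hn hlog hp hq hm k).trans ?_
    have hceil : 1 ≤ ⌈(n : ℝ) ^ (1 - (α + β) / 2 + δ)⌉₊ := Nat.one_le_ceil_iff.2 (by positivity)
    exact exp_le_exp.2 (mul_le_of_one_le_left hexponent (by exact_mod_cast hceil))

end FailureProbability

/-- in `SBM(n, α log n/n, β log n/n)` with fixed `k ≥ 1`, with probability
`1 − o(1)` the set `F` of vertices outside the `k`-core (i.e. vertices belonging to no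
induced subgraph of minimum degree `≥ k`) satisfies `|F| ≤ n^{1 − (α+β)/2 + o(1)}`:
for every `δ > 0`, `P(|F| ≤ n^{1 − (α+β)/2 + δ}) → 1`. -/
theorem statement11 (α β : ℝ) (hα : 0 < α) (hβ : 0 < β) (k : ℕ) (hk : 1 ≤ k)
    (δ : ℝ) (hδ : 0 < δ)
    (Ω : ℕ → Type) [∀ n, MeasurableSpace (Ω n)]
    (ℙ : ∀ n, Measure (Ω n)) (hP : ∀ n, IsProbabilityMeasure (ℙ n))
    (σ : ∀ n, Ω n → Fin n → Bool) (X : ∀ n, Ω n → Fin n → Fin n → Bool)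
    (hmeas : ∀ (n : ℕ) (ℓ : Fin n → Bool) (e : Fin n → Fin n → Bool),
      MeasurableSet {ω | σ n ω = ℓ ∧ X n ω = e})
    (hsbm : ∀ n, sbmLaw (ℙ n) n (α * Real.log n / n) (β * Real.log n / n) (σ n) (X n)) :
    Filter.Tendsto
      (fun n : ℕ => (ℙ n {ω |
        (Set.ncard {i : Fin n | ∀ S : Finset (Fin n),
            (∀ v ∈ S, k ≤ (S.filter (fun u => u ≠ v ∧ X n ω v u = true)).card) →
            i ∉ S} : ℝ)
          ≤ (n : ℝ) ^ (1 - (α + β) / 2 + δ)}).toReal)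
      Filter.atTop (nhds 1) := by
  have hσX (n : ℕ) : Measurable fun ω => (σ n ω, X n ω) :=
    measurable_to_countable' fun ⟨l, e⟩ => by
      convert hmeas n l e using 1
      ext ω
      simp
  have hfail : Filter.Tendsto (fun n : ℕ => (ℙ n).real {ω | (n : ℝ) ^ (1 - (α + β) / 2 + δ) <
      (outsideKCore (X n ω) k).ncard}) Filter.atTop (nhds 0) := by
    refine squeeze_zero' (.of_forall fun n => measureReal_nonneg) ?_
      (Real.tendsto_exp_atBot.comp (tendsto_failureExponent_atBot (α + β) hδ k))
    filter_upwards [eventually_measureReal_rpow_lt_ncard_outsideKCore_le hα.le hβ.le hδ k] with n hn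
    exact hn (Ω n) (ℙ n) (σ n) (X n) (hσX n) (hsbm n)
  refine (sub_zero (1 : ℝ) ▸ hfail.const_sub 1).congr fun n => ?_
  have hbad : MeasurableSet {ω | (n : ℝ) ^ (1 - (α + β) / 2 + δ) <
      (outsideKCore (X n ω) k).ncard} :=
    (hσX n).snd (Set.toFinite {e | (n : ℝ) ^ (1 - (α + β) / 2 + δ) <
      (outsideKCore e k).ncard}).measurableSet
  rw [← probReal_compl_eq_one_sub hbad, Set.compl_ofPred]
  simp_rw [not_lt]
  rfl
end
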